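/- Let E be a real inner product space, z ∈ E, γ > 0, and let G : E → ℝ be defined by G(x) = (1/(2γ))·‖x − z‖². Then for every ε ≥ 0 and every x ∈ E: ∂_ε G(x) = { (x − z − r)/γ : r ∈ E, ‖r‖ ≤ √(2γε) }. -/

import Mathlib

open RealInnerProductSpace

/-- ε-subdifferential of the quadratic G(x) = ‖x - z‖²/(2γ) (Example 2.2 of the paper). -/
theorem eps_subdifferential_of_quadratic
    {E : Type*} [NormedAddCommGroup E] [InnerProductSpace ℝ E]
    (z : E) (γ : ℝ) (hγ : 0 < γ) (ε : ℝ) (hε : 0 ≤ ε) (x : E) :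
    {p : E | ∀ w : E,
        1 / (2 * γ) * ‖w - z‖ ^ 2
          ≥ 1 / (2 * γ) * ‖x - z‖ ^ 2 + ⟪p, w - x⟫ - ε}
      = {p : E | ∃ r : E, ‖r‖ ≤ Real.sqrt (2 * γ * ε) ∧ p = (1 / γ) • (x - z - r)} := by
  have key : ∀ r w : E, 1 / (2 * γ) * ‖w - z‖ ^ 2
      - (1 / (2 * γ) * ‖x - z‖ ^ 2 + ⟪(1 / γ) • (x - z - r), w - x⟫ - ε)
      = 1 / (2 * γ) * (‖w - x + r‖ ^ 2 + (2 * γ * ε - ‖r‖ ^ 2)) := by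
    intro r w
    have h1 : w - z = (x - z) + (w - x) := by abel
    rw [h1, norm_add_sq_real (x - z), norm_add_sq_real (w - x), real_inner_smul_left,
      inner_sub_left (x - z) r, real_inner_comm r (w - x)]
    field_simp
    ring
  have hc : 0 < 1 / (2 * γ) := by positivity
  ext p
  simp only [Set.mem_setOf_eq]
  constructor
  · intro h
    have hp : p = (1 / γ) • (x - z - (x - z - γ • p)) := by
      rw [sub_sub_cancel, smul_smul, one_div_mul_cancel hγ.ne', one_smul]
    refine ⟨x - z - γ • p, ?_, hp⟩
    generalize x - z - γ • p = r at hp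
    have h2 := key r (x - r)
    have h3 := h (x - r)
    rw [← hp] at h2
    have h4 : x - r - x + r = 0 := by abel
    rw [h4, norm_zero] at h2
    apply Real.le_sqrt_of_sq_le
    have h5 : 0 ≤ 1 / (2 * γ) * ((0:ℝ) ^ 2 + (2 * γ * ε - ‖r‖ ^ 2)) := by linarith
    have := nonneg_of_mul_nonneg_right h5 hc
    linarith
  · rintro ⟨r, hr, rfl⟩ w
    have h2 := key r w
    have h3 : ‖r‖ ^ 2 ≤ 2 * γ * ε := (Real.le_sqrt (norm_nonneg _) (by positivity)).1 hr
    have h4 : 0 ≤ 1 / (2 * γ) * (‖w - x + r‖ ^ 2 + (2 * γ * ε - ‖r‖ ^ 2)) :=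
      mul_nonneg hc.le (by linarith [sq_nonneg ‖w - x + r‖])
    linarith
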